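/- arXiv:2305.00154 — 6 statements merged into one kernel-verified Lean document; each statement's English description precedes it below -/
import Mathlib

section
/- Let Υ be a real symmetric positive definite N×N matrix, let A be an invertible real N×N matrix, and set Σ := A·Υ^{-1}·Aᵀ, with diagonal entries σ_1, …, σ_N (which are all positive). Then for every z ∈ ℝ^N, max_{1≤n≤N} |(A·Υ^{-1}·z)_n| / sqrt(σ_n) ≤ sqrt(N) · sqrt(zᵀ·Υ^{-1}·z). -/
open Matrix Finset

/-- Cauchy–Schwarz for the bilinear form of a real positive semidefinite matrix. -/
theorem Matrix.PosSemidef.sq_dotProduct_mulVec_le {ι : Type*} [Fintype ι]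
    {M : Matrix ι ι ℝ} (hM : M.PosSemidef) (x y : ι → ℝ) :
    (x ⬝ᵥ (M *ᵥ y)) ^ 2 ≤ (x ⬝ᵥ (M *ᵥ x)) * (y ⬝ᵥ (M *ᵥ y)) := by
  have hT : Mᵀ = M := by simpa using hM.isHermitian.eq
  have hsymm : y ⬝ᵥ (M *ᵥ x) = x ⬝ᵥ (M *ᵥ y) := by
    rw [dotProduct_mulVec, ← mulVec_transpose, hT, dotProduct_comm]
  have hquad (t : ℝ) : 0 ≤ (y ⬝ᵥ (M *ᵥ y)) * (t * t) + (2 * (x ⬝ᵥ (M *ᵥ y))) * t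
      + x ⬝ᵥ (M *ᵥ x) := by
    have h := hM.dotProduct_mulVec_nonneg (x + t • y)
    simp only [star_trivial, mulVec_add, mulVec_smul, dotProduct_add, add_dotProduct,
      smul_dotProduct, dotProduct_smul, smul_eq_mul, hsymm] at h
    linarith
  have h := discrim_le_zero hquad
  rw [discrim] at h
  linarith

/-- The deterministic core inequality ('keyIneq') of Propositions 1 and 2:
with `Σ := A Υ⁻¹ Aᵀ`, one has `‖A Υ⁻¹ z‖_{D_Σ^{-1/2},∞} ≤ √N · ‖z‖_{Υ⁻¹}`. -/
theorem DUCB_key_inequality (N : ℕ) (hN : 1 ≤ N) (Υ A : Matrix (Fin N) (Fin N) ℝ)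
    (hΥ : Υ.PosDef) (hA : IsUnit A) (z : Fin N → ℝ) :
    Finset.univ.sup' (Finset.univ_nonempty_iff.mpr (Fin.pos_iff_nonempty.mp hN))
      (fun n => |((A * Υ⁻¹) *ᵥ z) n| / Real.sqrt ((A * Υ⁻¹ * Aᵀ) n n))
    ≤ Real.sqrt N * Real.sqrt (z ⬝ᵥ (Υ⁻¹ *ᵥ z)) := by
  have hM : Υ⁻¹.PosSemidef := hΥ.inv.posSemidef
  refine Finset.sup'_le _ _ fun n _ => ?_
  have hz : ((A * Υ⁻¹) *ᵥ z) n = A n ⬝ᵥ (Υ⁻¹ *ᵥ z) := by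
    rw [← mulVec_mulVec]; rfl
  have hσ : (A * Υ⁻¹ * Aᵀ) n n = A n ⬝ᵥ (Υ⁻¹ *ᵥ A n) := by
    rw [Matrix.mul_assoc]; rfl
  have hσ_nonneg : 0 ≤ A n ⬝ᵥ (Υ⁻¹ *ᵥ A n) := by
    simpa using hM.dotProduct_mulVec_nonneg (A n)
  have hN' : 1 ≤ Real.sqrt N := Real.one_le_sqrt.mpr (by exact_mod_cast hN)
  rw [hz, hσ]
  calc |A n ⬝ᵥ (Υ⁻¹ *ᵥ z)| / Real.sqrt (A n ⬝ᵥ (Υ⁻¹ *ᵥ A n))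
      ≤ Real.sqrt (z ⬝ᵥ (Υ⁻¹ *ᵥ z)) := by
        refine div_le_of_le_mul₀ (Real.sqrt_nonneg _) (Real.sqrt_nonneg _) ?_
        rw [mul_comm, ← Real.sqrt_mul hσ_nonneg]
        exact Real.abs_le_sqrt (hM.sq_dotProduct_mulVec_le _ _)
    _ ≤ Real.sqrt N * Real.sqrt (z ⬝ᵥ (Υ⁻¹ *ᵥ z)) :=
        le_mul_of_one_le_left (Real.sqrt_nonneg _) hN'
end

section
/- Fix N ≥ 1. Let A_1, A_2, … be invertible real N×N matrices, Σ_0 a symmetric positive definite N×N matrix, φ̂_0 ∈ ℝ^N, and for each k ≥ 0 let Y_k be a symmetric positive semidefinite N×N matrix, y_k ∈ ℝ^N, λ_k ≥ 0, and let (ω_k)_{k≥-1} be a nondecreasing real sequence with ω_{-1} = 0. Define Γ_0 = I and Γ_{k+1} = A_{k+1} Γ_k A_{k+1}ᵀ, and generate (Σ_k, φ̂_k) by the discounted Kalman filter recursions: Σ_{k+1/2} = (Σ_k^{-1} + λ_k Y_k)^{-1}; φ̂_{k+1/2} = φ̂_k + λ_k Σ_{k+1/2}(y_k − Y_k φ̂_k);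 Σ_{k+1} = A_{k+1}(Σ_{k+1/2}^{-1} + (ω_k − ω_{k-1})Γ_k^{-1})^{-1}A_{k+1}ᵀ; φ̂_{k+1} = Σ_{k+1} A_{k+1}^{-ᵀ} Σ_{k+1/2}^{-1} φ̂_{k+1/2}. Then for every k ≥ 0: Σ_k = A[k:1] Υ_k^{-1} A[k:1]ᵀ and φ̂_k = A[k:1] Υ_k^{-1} ( Σ_0^{-1} φ̂_0 + Σ_{t=0}^{k-1} λ_t A[t:1]ᵀ y_t ), where Υ_k := Σ_0^{-1} + Σ_{t=0}^{k-1} λ_t A[t:1]ᵀ Y_t A[t:1] + ω_{k-1}·I. -/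
open Matrix Finset

theorem inv_mul_inv_mul_transpose {n : Type*} [Fintype n] [DecidableEq n]
    (P U : Matrix n n ℝ) (hU : IsUnit U) :
    (P * U⁻¹ * Pᵀ)⁻¹ = P⁻¹ᵀ * U * P⁻¹ := by
  rw [Matrix.mul_inv_rev, Matrix.mul_inv_rev,
    nonsing_inv_nonsing_inv U ((isUnit_iff_isUnit_det U).1 hU), ← transpose_nonsing_inv, mul_assoc]

theorem inv_transpose_inv_mul_mul_inv {n : Type*} [Fintype n] [DecidableEq n]
    (P U : Matrix n n ℝ) (hP : IsUnit P) :
    (P⁻¹ᵀ * U * P⁻¹)⁻¹ = P * U⁻¹ * Pᵀ := by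
  have hP' := (isUnit_iff_isUnit_det P).1 hP
  rw [Matrix.mul_inv_rev, Matrix.mul_inv_rev, nonsing_inv_nonsing_inv P hP',
    ← transpose_nonsing_inv, nonsing_inv_nonsing_inv P hP', mul_assoc]

theorem inv_transpose_congr_cancel {n : Type*} [Fintype n] [DecidableEq n]
    (P Y : Matrix n n ℝ) (hP : IsUnit P) :
    P⁻¹ᵀ * (Pᵀ * Y * P) * P⁻¹ = Y := by
  have hP' := (isUnit_iff_isUnit_det P).1 hP
  calc P⁻¹ᵀ * (Pᵀ * Y * P) * P⁻¹ = (P * P⁻¹)ᵀ * Y * (P * P⁻¹) := by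
        simp only [transpose_mul, mul_assoc]
    _ = Y := by simp [mul_nonsing_inv P hP']

/-- Lemma 1 (estRecursion): closed form of the discounted Kalman filter.
Here `P k` denotes the state propagation matrix `A[k:1] = A_k ⋯ A_1` (with `P 0 = I`),
`Γ` is the auxiliary matrix, and the sequence `ω` is index-shifted so that `ω k`
stands for the paper's `ω_{k-1}` (hence `ω 0 = 0` encodes `ω_{-1} = 0` and the
recursion uses `ω (k+1) - ω k = ω_k - ω_{k-1}`). -/
theorem discountedKalman_closed_form (N : ℕ) (hN : 1 ≤ N)
    (A Γ P : ℕ → Matrix (Fin N) (Fin N) ℝ)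
    (S Shalf Y : ℕ → Matrix (Fin N) (Fin N) ℝ)
    (φ φhalf y : ℕ → Fin N → ℝ)
    (lam ω : ℕ → ℝ)
    (hA : ∀ k, IsUnit (A k))
    (hS0 : (S 0).PosDef)
    (hY : ∀ k, (Y k).PosSemidef)
    (hlam : ∀ k, 0 ≤ lam k)
    (hω0 : ω 0 = 0)
    (hωmono : Monotone ω)
    (hΓ0 : Γ 0 = 1)
    (hΓ : ∀ k, Γ (k + 1) = A (k + 1) * Γ k * (A (k + 1))ᵀ)
    (hP0 : P 0 = 1)
    (hP : ∀ k, P (k + 1) = A (k + 1) * P k)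
    (hShalf : ∀ k, Shalf k = ((S k)⁻¹ + lam k • Y k)⁻¹)
    (hφhalf : ∀ k, φhalf k = φ k + lam k • ((Shalf k) *ᵥ (y k - (Y k) *ᵥ φ k)))
    (hSrec : ∀ k, S (k + 1)
      = A (k + 1) * ((Shalf k)⁻¹ + (ω (k + 1) - ω k) • (Γ k)⁻¹)⁻¹ * (A (k + 1))ᵀ)
    (hφrec : ∀ k, φ (k + 1)
      = (S (k + 1)) *ᵥ (((A (k + 1))⁻¹)ᵀ *ᵥ ((Shalf k)⁻¹ *ᵥ φhalf k))) :
    ∀ k,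
      S k = P k * ((S 0)⁻¹ + (∑ t ∈ Finset.range k, lam t • ((P t)ᵀ * Y t * P t))
              + ω k • (1 : Matrix (Fin N) (Fin N) ℝ))⁻¹ * (P k)ᵀ
      ∧ φ k = (P k * ((S 0)⁻¹ + (∑ t ∈ Finset.range k, lam t • ((P t)ᵀ * Y t * P t))
              + ω k • (1 : Matrix (Fin N) (Fin N) ℝ))⁻¹)
          *ᵥ ((S 0)⁻¹ *ᵥ φ 0 + ∑ t ∈ Finset.range k, lam t • ((P t)ᵀ *ᵥ y t)) := by
  have hPu : ∀ k, IsUnit (P k) := by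
    intro k
    induction k with
    | zero => simp [hP0]
    | succ k ih => rw [hP]; exact (hA _).mul ih
  have hPdet : ∀ k, IsUnit (P k).det := fun k => (isUnit_iff_isUnit_det _).1 (hPu k)
  have hΓP : ∀ k, Γ k = P k * (P k)ᵀ := by
    intro k
    induction k with
    | zero => simp [hΓ0, hP0]
    | succ k ih => rw [hΓ, hP, ih, transpose_mul]; simp only [mul_assoc]
  have hωnn : ∀ k, 0 ≤ ω k := fun k => hω0 ▸ hωmono (Nat.zero_le k)
  have hpos : ∀ m (c : ℝ), 0 ≤ c →
      IsUnit ((S 0)⁻¹ + (∑ t ∈ range m, lam t • ((P t)ᵀ * Y t * P t))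
        + c • (1 : Matrix (Fin N) (Fin N) ℝ)) := by
    intro m c hc
    refine ((hS0.inv.add_posSemidef (posSemidef_sum _ fun t _ => ?_)).add_posSemidef
      (PosSemidef.one.smul hc)).isUnit
    simpa [conjTranspose_eq_transpose_of_trivial] using
      ((hY t).conjTranspose_mul_mul_same (P t)).smul (hlam t)
  intro k
  induction k with
  | zero =>
    have h0 := (isUnit_iff_isUnit_det _).1 hS0.isUnit
    simp [hP0, hω0, nonsing_inv_nonsing_inv _ h0, mul_nonsing_inv _ h0]
  | succ k ih =>
    obtain ⟨ihS, ihφ⟩ := ih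
    have hU := hpos k (ω k) (hωnn k)
    have hH := hpos (k + 1) (ω k) (hωnn k)
    rw [sum_range_succ] at hH
    rw [sum_range_succ, sum_range_succ]
    set M := ∑ t ∈ range k, lam t • ((P t)ᵀ * Y t * P t)
    set b := (S 0)⁻¹ *ᵥ φ 0 + ∑ t ∈ range k, lam t • ((P t)ᵀ *ᵥ y t) with hb
    set U := (S 0)⁻¹ + M + ω k • (1 : Matrix (Fin N) (Fin N) ℝ) with hUdef
    have hSinv : (S k)⁻¹ = (P k)⁻¹ᵀ * U * (P k)⁻¹ := by
      rw [ihS, inv_mul_inv_mul_transpose _ _ hU]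
    have hsum : (S k)⁻¹ + lam k • Y k = (P k)⁻¹ᵀ *
        ((S 0)⁻¹ + (M + lam k • ((P k)ᵀ * Y k * P k)) + ω k • 1) * (P k)⁻¹ := by
      have hreorder : (S 0)⁻¹ + (M + lam k • ((P k)ᵀ * Y k * P k))
          + ω k • (1 : Matrix (Fin N) (Fin N) ℝ) = U + lam k • ((P k)ᵀ * Y k * P k) := by
        rw [hUdef]; abel
      rw [hreorder, mul_add, add_mul, Matrix.mul_smul, Matrix.smul_mul,
        inv_transpose_congr_cancel _ _ (hPu k), hSinv]
    have hdet : IsUnit ((S k)⁻¹ + lam k • Y k).det := by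
      rw [← isUnit_iff_isUnit_det, hsum]
      have hPinv : IsUnit (P k)⁻¹ := (isUnit_nonsing_inv_iff).2 (hPu k)
      exact (((isUnit_transpose _).2 hPinv).mul hH).mul hPinv
    have hShalfInv : (Shalf k)⁻¹ = (S k)⁻¹ + lam k • Y k := by
      rw [hShalf, nonsing_inv_nonsing_inv _ hdet]
    have hΓinv : (Γ k)⁻¹ = (P k)⁻¹ᵀ * 1 * (P k)⁻¹ := by
      rw [hΓP, Matrix.mul_inv_rev, ← transpose_nonsing_inv, mul_one]
    have hS : S (k + 1) = P (k + 1) * ((S 0)⁻¹ + (M + lam k • ((P k)ᵀ * Y k * P k))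
        + ω (k + 1) • (1 : Matrix (Fin N) (Fin N) ℝ))⁻¹ * (P (k + 1))ᵀ := by
      have hpred : (Shalf k)⁻¹ + (ω (k + 1) - ω k) • (Γ k)⁻¹ = (P k)⁻¹ᵀ *
          ((S 0)⁻¹ + (M + lam k • ((P k)ᵀ * Y k * P k)) + ω (k + 1) • 1) * (P k)⁻¹ := by
        rw [hShalfInv, hsum, hΓinv,
          ← Matrix.smul_mul (ω (k + 1) - ω k), ← Matrix.mul_smul (P k)⁻¹ᵀ, ← add_mul, ← mul_add, sub_smul]
        congr 2
        abel
      rw [hSrec, hpred, inv_transpose_inv_mul_mul_inv _ _ (hPu k), hP, transpose_mul]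
      simp only [mul_assoc]
    refine ⟨hS, ?_⟩
    have hinfo : (Shalf k)⁻¹ *ᵥ φhalf k = (S k)⁻¹ *ᵥ φ k + lam k • y k := by
      have hcancel : (Shalf k)⁻¹ * Shalf k = 1 := by
        rw [hShalfInv, hShalf, mul_nonsing_inv _ hdet]
      rw [hφhalf, mulVec_add, mulVec_smul, mulVec_mulVec, hcancel, one_mulVec, hShalfInv,
        add_mulVec, smul_mulVec, smul_sub]
      abel
    have hSφ : (S k)⁻¹ *ᵥ φ k = (P k)⁻¹ᵀ *ᵥ b := by
      rw [hSinv, ihφ, mulVec_mulVec]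
      congr 1
      calc (P k)⁻¹ᵀ * U * (P k)⁻¹ * (P k * U⁻¹)
          = (P k)⁻¹ᵀ * (U * (((P k)⁻¹ * P k) * U⁻¹)) := by simp only [mul_assoc]
        _ = (P k)⁻¹ᵀ := by
          rw [nonsing_inv_mul _ (hPdet k), one_mul,
            mul_nonsing_inv _ ((isUnit_iff_isUnit_det _).1 hU), mul_one]
    have hPP : (P k)ᵀ * (P k)⁻¹ᵀ = 1 := by
      rw [← transpose_mul, nonsing_inv_mul _ (hPdet k), transpose_one]
    have hPA : (P (k + 1))ᵀ * (A (k + 1))⁻¹ᵀ = (P k)ᵀ := by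
      rw [← transpose_mul, hP,
        nonsing_inv_mul_cancel_left _ _ ((isUnit_iff_isUnit_det _).1 (hA (k + 1)))]
    rw [hφrec, hinfo, hSφ, hS, mulVec_mulVec, mul_assoc, hPA, ← mulVec_mulVec, mulVec_add,
      mulVec_mulVec, hPP, one_mulVec, mulVec_smul, hb,
      add_assoc (_ *ᵥ _)]
end

section
/- Fix k ≥ 1. Let Υ_0, Υ_1, …, Υ_k be real symmetric positive definite N×N matrices with Υ_t ⪯ Υ_k for every 0 ≤ t ≤ k−1, let A_1, …, A_{k−1} be invertible real N×N matrices, and set Σ_t := A[t:1] Υ_t^{-1} A[t:1]ᵀ. Let Y_0, …, Y_{k−1} be symmetric N×N matrices, δ_0, …, δ_{k−1} ∈ ℝ^N, λ_0, …, λ_{k−1} ≥ 0, and let λ̄, B > 0 be such that λ_t · ‖Y_t‖_{Σ_t} ≤ λ̄ for all t (where ‖Y‖_Σ denotes the square root of the largest eigenvalue of Y Σ Y) and Σ_{t=0}^{k−1} ‖δ_t‖ ≤ B. Then ‖ Σ_{t=0}^{k−1} λ_t A[t:1]ᵀ Y_t δ_t ‖_{Υ_k^{-1}} ≤ λ̄·B.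 -/
open Matrix Finset

/-- The largest eigenvalue of a real square matrix, as the supremum of its spectrum. -/
noncomputable def lambdaMax {N : ℕ} (S : Matrix (Fin N) (Fin N) ℝ) : ℝ :=
  sSup (spectrum ℝ S)

/-- The Rayleigh bound: a real quadratic form is at most the largest eigenvalue times the squared
Euclidean length. -/
lemma dotProduct_mulVec_le_lambdaMax {N : ℕ} {S : Matrix (Fin N) (Fin N) ℝ} (hS : S.IsHermitian)
    (x : Fin N → ℝ) : x ⬝ᵥ (S *ᵥ x) ≤ lambdaMax S * (x ⬝ᵥ x) := by
  have hpsd : (algebraMap ℝ (Matrix (Fin N) (Fin N) ℝ) (lambdaMax S) - S).PosSemidef := by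
    refine posSemidef_iff_isHermitian_and_spectrum_nonneg.2 ⟨?_, ?_⟩
    · rw [Algebra.algebraMap_eq_smul_one]
      exact (isHermitian_one.smul (IsSelfAdjoint.all _)).sub hS
    · rw [← spectrum.singleton_sub_eq]
      rintro _ ⟨_, rfl, a, ha, rfl⟩
      exact sub_nonneg.2 (le_csSup S.finite_real_spectrum.bddAbove ha)
  have h := hpsd.dotProduct_mulVec_nonneg x
  rw [Algebra.algebraMap_eq_smul_one, sub_mulVec, smul_mulVec, one_mulVec, dotProduct_sub,
    dotProduct_smul, star_trivial, smul_eq_mul] at h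
  linarith

/-- Inversion is antitone for the Loewner order on positive definite matrices. -/
lemma dotProduct_inv_mulVec_le {n : Type*} [Fintype n] [DecidableEq n] {Q R : Matrix n n ℝ}
    (hQ : Q.PosDef) (hR : R.PosDef) (hQR : (R - Q).PosSemidef) (x : n → ℝ) :
    x ⬝ᵥ (R⁻¹ *ᵥ x) ≤ x ⬝ᵥ (Q⁻¹ *ᵥ x) := by
  set u := R⁻¹ *ᵥ x with hu
  set v := Q⁻¹ *ᵥ x with hv
  have hRu : R *ᵥ u = x := by
    rw [hu, mulVec_mulVec, mul_nonsing_inv _ ((isUnit_iff_isUnit_det R).1 hR.isUnit), one_mulVec]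
  have hQv : Q *ᵥ v = x := by
    rw [hv, mulVec_mulVec, mul_nonsing_inv _ ((isUnit_iff_isUnit_det Q).1 hQ.isUnit), one_mulVec]
  have hvQu : v ⬝ᵥ (Q *ᵥ u) = x ⬝ᵥ u := by
    have hQT : Qᵀ = Q := by simpa using hQ.isHermitian.eq
    rw [dotProduct_mulVec, ← mulVec_transpose, hQT, hQv]
  have hsq := hQ.posSemidef.dotProduct_mulVec_nonneg (u - v)
  have hle := hQR.dotProduct_mulVec_nonneg u
  simp only [star_trivial, mulVec_sub, sub_mulVec, dotProduct_sub, sub_dotProduct, hRu, hQv,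
    hvQu] at hsq hle
  rw [dotProduct_comm u x] at hsq hle
  rw [dotProduct_comm v x] at hsq
  linarith

/-- The triangle inequality for the seminorm attached to a positive semidefinite matrix. -/
lemma sqrt_dotProduct_mulVec_sum_le {n ι : Type*} [Fintype n] [DecidableEq n]
    {M : Matrix n n ℝ} (hM : M.PosSemidef) (s : Finset ι) (f : ι → n → ℝ) :
    Real.sqrt ((∑ t ∈ s, f t) ⬝ᵥ (M *ᵥ ∑ t ∈ s, f t))
      ≤ ∑ t ∈ s, Real.sqrt (f t ⬝ᵥ (M *ᵥ f t)) := by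
  obtain ⟨C, rfl⟩ : ∃ C : Matrix n n ℝ, M = Cᵀ * C := by
    open scoped MatrixOrder in
    obtain ⟨C, hC⟩ := CStarAlgebra.nonneg_iff_eq_star_mul_self.1 hM.nonneg
    exact ⟨C, by simpa [star_eq_conjTranspose] using hC⟩
  have hnorm (x : n → ℝ) :
      Real.sqrt (x ⬝ᵥ ((Cᵀ * C) *ᵥ x)) = ‖WithLp.toLp 2 (C *ᵥ x)‖ := by
    rw [EuclideanSpace.norm_eq, ← mulVec_mulVec, dotProduct_mulVec, vecMul_transpose]
    simp [dotProduct, sq]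
  have hsum : WithLp.toLp 2 (C *ᵥ ∑ t ∈ s, f t) = ∑ t ∈ s, WithLp.toLp 2 (C *ᵥ f t) := by
    rw [mulVec_sum, WithLp.toLp_sum]
  simp only [hnorm, hsum]
  exact norm_sum_le s fun t => WithLp.toLp 2 (C *ᵥ f t)

/-- Lemma 4 (upperBoundII): the disturbance term of the D-UCB bound is at most `λ̄·B`.
Here `P t` is the propagation matrix `A[t:1]` (with `P 0 = I`), `Σ_t = P t (Υ t)⁻¹ (P t)ᵀ`,
and `‖Y‖_Σ = √(λ_max (Y Σ Y))`. -/
theorem disturbance_term_bound (N k : ℕ) (hk : 1 ≤ k)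
    (Υ : ℕ → Matrix (Fin N) (Fin N) ℝ) (hΥ : ∀ t ≤ k, (Υ t).PosDef)
    (hΥle : ∀ t < k, (Υ k - Υ t).PosSemidef)
    (A P : ℕ → Matrix (Fin N) (Fin N) ℝ)
    (hA : ∀ t, 1 ≤ t → t < k → IsUnit (A t))
    (hP0 : P 0 = 1) (hP : ∀ t, P (t + 1) = A (t + 1) * P t)
    (Y : ℕ → Matrix (Fin N) (Fin N) ℝ) (hY : ∀ t < k, (Y t).IsHermitian)
    (δ : ℕ → Fin N → ℝ) (lam : ℕ → ℝ) (hlam : ∀ t < k, 0 ≤ lam t)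
    (lamBar B : ℝ) (hlamBar : 0 < lamBar) (hB : 0 < B)
    (hYn : ∀ t < k, lam t * Real.sqrt (lambdaMax
        (Y t * (P t * (Υ t)⁻¹ * (P t)ᵀ) * Y t)) ≤ lamBar)
    (hδ : ∑ t ∈ Finset.range k, Real.sqrt (δ t ⬝ᵥ δ t) ≤ B) :
    Real.sqrt ((∑ t ∈ Finset.range k, lam t • ((P t)ᵀ *ᵥ (Y t *ᵥ δ t)))
        ⬝ᵥ ((Υ k)⁻¹ *ᵥ (∑ t ∈ Finset.range k, lam t • ((P t)ᵀ *ᵥ (Y t *ᵥ δ t)))))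
      ≤ lamBar * B := by
  have hterm : ∀ t ∈ Finset.range k,
      Real.sqrt ((lam t • ((P t)ᵀ *ᵥ (Y t *ᵥ δ t)))
        ⬝ᵥ ((Υ k)⁻¹ *ᵥ (lam t • ((P t)ᵀ *ᵥ (Y t *ᵥ δ t)))))
        ≤ lamBar * Real.sqrt (δ t ⬝ᵥ δ t) := by
    intro t ht
    have htk := Finset.mem_range.1 ht
    have hYT : (Y t)ᵀ = Y t := by simpa using (hY t htk).eq
    have hS : (Y t * (P t * (Υ t)⁻¹ * (P t)ᵀ) * Y t).IsHermitian := by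
      have h := ((hΥ t htk.le).inv.posSemidef.mul_mul_conjTranspose_same
        (P t)).conjTranspose_mul_mul_same (Y t)
      simpa [hYT] using h.isHermitian
    have hform : ((P t)ᵀ *ᵥ (Y t *ᵥ δ t)) ⬝ᵥ ((Υ t)⁻¹ *ᵥ ((P t)ᵀ *ᵥ (Y t *ᵥ δ t)))
        = δ t ⬝ᵥ ((Y t * (P t * (Υ t)⁻¹ * (P t)ᵀ) * Y t) *ᵥ δ t) := by
      simp only [← mulVec_mulVec]
      rw [dotProduct_mulVec (δ t), ← mulVec_transpose, hYT, dotProduct_mulVec (Y t *ᵥ δ t),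
        ← mulVec_transpose]
    have hbound := (dotProduct_inv_mulVec_le (hΥ t htk.le) (hΥ k le_rfl) (hΥle t htk)
      ((P t)ᵀ *ᵥ (Y t *ᵥ δ t))).trans
        (hform.le.trans (dotProduct_mulVec_le_lambdaMax hS (δ t)))
    rw [mulVec_smul, smul_dotProduct, dotProduct_smul, smul_eq_mul, smul_eq_mul, ← mul_assoc,
      Real.sqrt_mul (mul_self_nonneg _), Real.sqrt_mul_self (hlam t htk)]
    calc _ ≤ lam t * (Real.sqrt (lambdaMax (Y t * (P t * (Υ t)⁻¹ * (P t)ᵀ) * Y t))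
            * Real.sqrt (δ t ⬝ᵥ δ t)) := by
          rw [← Real.sqrt_mul' _ (by simpa using dotProduct_star_self_nonneg (δ t))]
          exact mul_le_mul_of_nonneg_left (Real.sqrt_le_sqrt hbound) (hlam t htk)
      _ ≤ lamBar * Real.sqrt (δ t ⬝ᵥ δ t) := by
          rw [← mul_assoc]
          exact mul_le_mul_of_nonneg_right (hYn t htk) (Real.sqrt_nonneg _)
  calc _ ≤ ∑ t ∈ Finset.range k, lamBar * Real.sqrt (δ t ⬝ᵥ δ t) :=
        (sqrt_dotProduct_mulVec_sum_le (hΥ k le_rfl).inv.posSemidef _ _).trans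
          (Finset.sum_le_sum hterm)
    _ ≤ lamBar * B := by
        rw [← Finset.mul_sum]
        exact mul_le_mul_of_nonneg_left hδ hlamBar.le
end

section
/- Fix 0 < v̲ ≤ v̄ and N ≥ 1. Let Y be a real diagonal N×N matrix each of whose diagonal entries y_n is either 0 or lies in the interval [1/v̄, 1/v̲], and let Σ be a real symmetric positive semidefinite N×N matrix. Then v̲·λ_max(Y Σ Y) ≤ Tr(Y Σ) ≤ v̄·N·λ_max(Y Σ Y), where λ_max denotes the largest eigenvalue. -/
open Matrix Finset

theorem lambdaMax_le_trace {N : ℕ} (hN : 1 ≤ N) {A : Matrix (Fin N) (Fin N) ℝ}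
    (hA : A.PosSemidef) : lambdaMax A ≤ A.trace := by
  have : Nonempty (Fin N) := ⟨⟨0, hN⟩⟩
  rw [lambdaMax, hA.1.spectrum_real_eq_range_eigenvalues]
  refine csSup_le (Set.range_nonempty _) ?_
  rintro _ ⟨i, rfl⟩
  rw [hA.1.trace_eq_sum_eigenvalues]
  exact Finset.single_le_sum (f := hA.1.eigenvalues)
    (fun j _ => hA.eigenvalues_nonneg j) (Finset.mem_univ i)

theorem trace_le_card_mul_lambdaMax {N : ℕ} {A : Matrix (Fin N) (Fin N) ℝ}
    (hA : A.IsHermitian) : A.trace ≤ N * lambdaMax A := by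
  have h : ∀ i ∈ Finset.univ, hA.eigenvalues i ≤ lambdaMax A := fun i _ =>
    le_csSup A.finite_real_spectrum.bddAbove (hA.eigenvalues_mem_spectrum_real i)
  rw [hA.trace_eq_sum_eigenvalues]
  simpa using Finset.sum_le_card_nsmul _ _ _ h

theorem trace_diagonal_mul {N : ℕ} (y : Fin N → ℝ) (S : Matrix (Fin N) (Fin N) ℝ) :
    (Matrix.diagonal y * S).trace = ∑ i, y i * S i i := by
  simp [Matrix.trace]

theorem trace_diagonal_mul_mul_diagonal {N : ℕ} (y : Fin N → ℝ)
    (S : Matrix (Fin N) (Fin N) ℝ) :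
    (Matrix.diagonal y * S * Matrix.diagonal y).trace = ∑ i, y i ^ 2 * S i i := by
  simp only [Matrix.trace, Matrix.diag_apply, Matrix.mul_diagonal, Matrix.diagonal_mul]
  exact Finset.sum_congr rfl fun i _ => by ring

/-- Lemma 8 (conn), statement 2: for a diagonal `Y` whose entries are `0` or lie in
`[1/v̄, 1/v̲]`, one has `v̲·‖Y‖²_Σ ≤ Tr(YΣ) ≤ v̄·N·‖Y‖²_Σ` where `‖Y‖²_Σ = λ_max(YΣY)`. -/
theorem trace_YSigma_two_sided (N : ℕ) (hN : 1 ≤ N) (vlo vhi : ℝ)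
    (hvlo : 0 < vlo) (hvv : vlo ≤ vhi)
    (yd : Fin N → ℝ) (hy : ∀ n, yd n = 0 ∨ (1 / vhi ≤ yd n ∧ yd n ≤ 1 / vlo))
    (S : Matrix (Fin N) (Fin N) ℝ) (hS : S.PosSemidef) :
    vlo * lambdaMax (Matrix.diagonal yd * S * Matrix.diagonal yd)
        ≤ (Matrix.diagonal yd * S).trace
      ∧ (Matrix.diagonal yd * S).trace
        ≤ vhi * N * lambdaMax (Matrix.diagonal yd * S * Matrix.diagonal yd) := by
  have hvhi : 0 < vhi := hvlo.trans_le hvv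
  have hA : (Matrix.diagonal yd * S * Matrix.diagonal yd).PosSemidef := by
    simpa using hS.mul_mul_conjTranspose_same (Matrix.diagonal yd)
  have hdiag : ∀ i, 0 ≤ S i i := fun i => hS.diag_nonneg
  have hbounds : ∀ i, vlo * yd i ^ 2 ≤ yd i ∧ yd i ≤ vhi * yd i ^ 2 := by
    intro i
    rcases hy i with h | ⟨h1, h2⟩
    · simp [h]
    · have hpos : 0 < yd i := (one_div_pos.mpr hvhi).trans_le h1
      rw [div_le_iff₀ hvhi] at h1
      rw [le_div_iff₀ hvlo] at h2
      constructor <;> nlinarith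
  constructor
  · calc vlo * lambdaMax (Matrix.diagonal yd * S * Matrix.diagonal yd)
        ≤ vlo * (Matrix.diagonal yd * S * Matrix.diagonal yd).trace :=
          mul_le_mul_of_nonneg_left (lambdaMax_le_trace hN hA) hvlo.le
      _ ≤ (Matrix.diagonal yd * S).trace := by
          rw [trace_diagonal_mul_mul_diagonal, trace_diagonal_mul, Finset.mul_sum]
          refine Finset.sum_le_sum fun i _ => ?_
          rw [← mul_assoc]
          exact mul_le_mul_of_nonneg_right (hbounds i).1 (hdiag i)
  · calc (Matrix.diagonal yd * S).trace
        ≤ vhi * (Matrix.diagonal yd * S * Matrix.diagonal yd).trace := by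
          rw [trace_diagonal_mul_mul_diagonal, trace_diagonal_mul, Finset.mul_sum]
          refine Finset.sum_le_sum fun i _ => ?_
          rw [← mul_assoc]
          exact mul_le_mul_of_nonneg_right (hbounds i).2 (hdiag i)
      _ ≤ vhi * N * lambdaMax (Matrix.diagonal yd * S * Matrix.diagonal yd) := by
          rw [mul_assoc vhi]
          exact mul_le_mul_of_nonneg_left (trace_le_card_mul_lambdaMax hA.1) hvhi.le
end

section
/- Let Υ be a real symmetric positive definite N×N matrix with Υ^{-1} ⪯ (1/λ)·I for some λ > 0; let A be an invertible real N×N matrix with α̲·I ⪯ AᵀA ⪯ ᾱ·I for some 0 < α̲ ≤ ᾱ; let Σ_0 be a real symmetric positive definite N×N matrix with σ̲·I ⪯ Σ_0 for some σ̲ > 0; and let φ_0, φ ∈ ℝ^N with ‖φ_0‖ ≤ φ̄ and ‖φ‖ ≤ φ̄. Then ‖ A Υ^{-1} Σ_0^{-1} ( φ_0 − A^{-1} φ ) ‖ ≤ φ̄·sqrt(ᾱ)·(1 + 1/sqrt(α̲)) / (σ̲·λ). -/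
open Matrix Finset

/-- The Euclidean norm on coordinate vectors, as the square root of the dot product. -/
theorem sqrt_dotProduct_self_eq_norm {N : ℕ} (v : Fin N → ℝ) :
    Real.sqrt (v ⬝ᵥ v) = ‖WithLp.toLp 2 v‖ := by
  rw [EuclideanSpace.norm_eq]
  congr 1
  simp [dotProduct, sq]

theorem sqrt_dotProduct_self_sub_le {N : ℕ} (v w : Fin N → ℝ) :
    Real.sqrt ((v - w) ⬝ᵥ (v - w)) ≤ Real.sqrt (v ⬝ᵥ v) + Real.sqrt (w ⬝ᵥ w) := by
  simp only [sqrt_dotProduct_self_eq_norm, WithLp.toLp_sub]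
  exact norm_sub_le _ _

theorem dotProduct_self_nonneg_real {N : ℕ} (v : Fin N → ℝ) : 0 ≤ v ⬝ᵥ v :=
  Finset.sum_nonneg fun i _ => mul_self_nonneg (v i)

theorem dotProduct_le_sqrt_mul_sqrt {N : ℕ} (v w : Fin N → ℝ) :
    v ⬝ᵥ w ≤ Real.sqrt (v ⬝ᵥ v) * Real.sqrt (w ⬝ᵥ w) := by
  have h := Real.sum_mul_le_sqrt_mul_sqrt Finset.univ v w
  simpa only [dotProduct, sq] using h

theorem Matrix.PosSemidef.dotProduct_mulVec_le {N : ℕ} {P Q : Matrix (Fin N) (Fin N) ℝ}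
    (h : (Q - P).PosSemidef) (v : Fin N → ℝ) : v ⬝ᵥ P *ᵥ v ≤ v ⬝ᵥ Q *ᵥ v := by
  have := h.dotProduct_mulVec_nonneg v
  simpa [sub_mulVec, dotProduct_sub] using this

/-- A matrix bounded below by `c • 1` expands norms by a factor at least `c`. -/
theorem mul_sqrt_le_sqrt_mulVec {N : ℕ} {S : Matrix (Fin N) (Fin N) ℝ} {c : ℝ}
    (h : (S - c • 1).PosSemidef) (v : Fin N → ℝ) :
    c * Real.sqrt (v ⬝ᵥ v) ≤ Real.sqrt ((S *ᵥ v) ⬝ᵥ (S *ᵥ v)) := by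
  have hle := h.dotProduct_mulVec_le v
  simp only [smul_mulVec, one_mulVec, dotProduct_smul, smul_eq_mul] at hle
  have hcs := dotProduct_le_sqrt_mul_sqrt v (S *ᵥ v)
  have hsq := Real.mul_self_sqrt (dotProduct_self_nonneg_real v)
  rcases (Real.sqrt_nonneg (v ⬝ᵥ v)).eq_or_lt with h0 | h0
  · rw [← h0, mul_zero]
    exact Real.sqrt_nonneg _
  · refine le_of_mul_le_mul_left ?_ h0
    calc Real.sqrt (v ⬝ᵥ v) * (c * Real.sqrt (v ⬝ᵥ v)) = c * (v ⬝ᵥ v) := by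
          linear_combination c * hsq
      _ ≤ _ := hle.trans hcs

/-- A positive semidefinite matrix bounded above by `c • 1` scales norms by at most `c`. -/
theorem sqrt_mulVec_le_mul_sqrt {N : ℕ} {P : Matrix (Fin N) (Fin N) ℝ} {c : ℝ}
    (hP : P.PosSemidef) (hc : 0 < c) (h : (c • 1 - P).PosSemidef) (v : Fin N → ℝ) :
    Real.sqrt ((P *ᵥ v) ⬝ᵥ (P *ᵥ v)) ≤ c * Real.sqrt (v ⬝ᵥ v) := by
  set y := P *ᵥ v with hy
  have hle := h.dotProduct_mulVec_le y
  simp only [smul_mulVec, one_mulVec, dotProduct_smul, smul_eq_mul] at hle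
  have hsymm : v ⬝ᵥ P *ᵥ y = y ⬝ᵥ y := by
    have hT : Pᵀ = P := by simpa using hP.isHermitian.eq
    rw [dotProduct_mulVec, ← mulVec_transpose, hT]
  have hpos : 0 ≤ c ^ 2 * (v ⬝ᵥ y) - 2 * c * (y ⬝ᵥ y) + y ⬝ᵥ P *ᵥ y := by
    have := hP.dotProduct_mulVec_nonneg (c • v - y)
    simp only [star_trivial, mulVec_sub, mulVec_smul, dotProduct_sub, sub_dotProduct,
      smul_dotProduct, dotProduct_smul, smul_eq_mul, hsymm, ← hy] at this
    linarith
  have hyy : y ⬝ᵥ y ≤ c * (v ⬝ᵥ y) := by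
    refine le_of_mul_le_mul_left ?_ hc
    linarith
  have hcs := dotProduct_le_sqrt_mul_sqrt v y
  have hsq := Real.mul_self_sqrt (dotProduct_self_nonneg_real y)
  rcases (Real.sqrt_nonneg (y ⬝ᵥ y)).eq_or_lt with h0 | h0
  · rw [← h0]
    positivity
  · refine le_of_mul_le_mul_right ?_ h0
    calc _ = y ⬝ᵥ y := hsq
      _ ≤ c * (v ⬝ᵥ y) := hyy
      _ ≤ c * (Real.sqrt (v ⬝ᵥ v) * Real.sqrt (y ⬝ᵥ y)) := by gcongr
      _ = _ := by ring

theorem dotProduct_transpose_mul_mulVec {N : ℕ} (A : Matrix (Fin N) (Fin N) ℝ)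
    (v : Fin N → ℝ) : v ⬝ᵥ (Aᵀ * A) *ᵥ v = (A *ᵥ v) ⬝ᵥ (A *ᵥ v) := by
  rw [← mulVec_mulVec, dotProduct_mulVec, vecMul_transpose]

/-- The bound on Term I ('IneqDisturbI') in the proof of Lemma 10 (discrepancy):
`‖A Υ⁻¹ Σ₀⁻¹ (φ₀ − A⁻¹ φ)‖ ≤ φ̄·√ᾱ·(1 + 1/√α̲)/(σ̲·λ)`. -/
theorem term_I_bound (N : ℕ) (Υ A S0 : Matrix (Fin N) (Fin N) ℝ)
    (lam αlo αbar σlo φbar : ℝ)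
    (hΥ : Υ.PosDef) (hlam : 0 < lam)
    (hΥle : ((1 / lam) • (1 : Matrix (Fin N) (Fin N) ℝ) - Υ⁻¹).PosSemidef)
    (hA : IsUnit A) (hαlo : 0 < αlo) (hαα : αlo ≤ αbar)
    (hAlo : (Aᵀ * A - αlo • 1).PosSemidef) (hAhi : (αbar • 1 - Aᵀ * A).PosSemidef)
    (hS0 : S0.PosDef) (hσlo : 0 < σlo) (hS0lo : (S0 - σlo • 1).PosSemidef)
    (φ0 φ : Fin N → ℝ)
    (hφ0 : Real.sqrt (φ0 ⬝ᵥ φ0) ≤ φbar) (hφ : Real.sqrt (φ ⬝ᵥ φ) ≤ φbar) :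
    Real.sqrt ((((A * Υ⁻¹ * S0⁻¹) *ᵥ (φ0 - A⁻¹ *ᵥ φ))
        ⬝ᵥ ((A * Υ⁻¹ * S0⁻¹) *ᵥ (φ0 - A⁻¹ *ᵥ φ))))
      ≤ φbar * Real.sqrt αbar * (1 + 1 / Real.sqrt αlo) / (σlo * lam) := by
  have mulVec_inv_cancel {M : Matrix (Fin N) (Fin N) ℝ} (hM : IsUnit M) (v : Fin N → ℝ) :
      M *ᵥ (M⁻¹ *ᵥ v) = v := by
    rw [mulVec_mulVec, mul_nonsing_inv M ((isUnit_iff_isUnit_det M).mp hM), one_mulVec]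
  have hαbar : 0 < αbar := hαlo.trans_le hαα
  have hsqrt : 0 < Real.sqrt αlo := Real.sqrt_pos.mpr hαlo
  have hAinv : Real.sqrt ((A⁻¹ *ᵥ φ) ⬝ᵥ (A⁻¹ *ᵥ φ)) ≤ φbar / Real.sqrt αlo := by
    have h := hAlo.dotProduct_mulVec_le (A⁻¹ *ᵥ φ)
    rw [dotProduct_transpose_mul_mulVec, mulVec_inv_cancel hA] at h
    simp only [smul_mulVec, one_mulVec, dotProduct_smul, smul_eq_mul] at h
    rw [le_div_iff₀' hsqrt, ← Real.sqrt_mul hαlo.le]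
    exact (Real.sqrt_le_sqrt h).trans hφ
  set w := φ0 - A⁻¹ *ᵥ φ with hw
  have hwle : Real.sqrt (w ⬝ᵥ w) ≤ φbar * (1 + 1 / Real.sqrt αlo) :=
    calc _ ≤ _ := sqrt_dotProduct_self_sub_le _ _
      _ ≤ φbar + φbar / Real.sqrt αlo := add_le_add hφ0 hAinv
      _ = _ := by ring
  have hx : Real.sqrt ((S0⁻¹ *ᵥ w) ⬝ᵥ (S0⁻¹ *ᵥ w)) ≤ φbar * (1 + 1 / Real.sqrt αlo) / σlo := by
    have h := mul_sqrt_le_sqrt_mulVec hS0lo (S0⁻¹ *ᵥ w)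
    rw [mulVec_inv_cancel hS0.isUnit] at h
    rw [le_div_iff₀' hσlo]
    exact h.trans hwle
  set x := S0⁻¹ *ᵥ w with hxdef
  have hy := sqrt_mulVec_le_mul_sqrt hΥ.inv.posSemidef (one_div_pos.mpr hlam) hΥle x
  set y := Υ⁻¹ *ᵥ x with hydef
  have hAy : (A * Υ⁻¹ * S0⁻¹) *ᵥ w = A *ᵥ y := by
    rw [← mulVec_mulVec, ← mulVec_mulVec]
  have h := hAhi.dotProduct_mulVec_le y
  rw [dotProduct_transpose_mul_mulVec] at h
  simp only [smul_mulVec, one_mulVec, dotProduct_smul, smul_eq_mul] at h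
  rw [hAy]
  calc _ ≤ Real.sqrt (αbar * (y ⬝ᵥ y)) := Real.sqrt_le_sqrt h
    _ = Real.sqrt αbar * Real.sqrt (y ⬝ᵥ y) := Real.sqrt_mul hαbar.le _
    _ ≤ Real.sqrt αbar * (1 / lam * (φbar * (1 + 1 / Real.sqrt αlo) / σlo)) := by
        gcongr
        exact hy.trans (by gcongr)
    _ = _ := by
        field_simp
end

section
/- Fix N ≥ 1, 1 ≤ I ≤ N, and β ≥ 0. Let Σ be a real symmetric positive definite N×N matrix with diagonal entries σ_1, …, σ_N > 0, let φ, φ̂ ∈ ℝ^N satisfy max_{1≤n≤N} |φ̂_n − φ_n| / sqrt(σ_n) ≤ β, and define the D-UCB vector μ ∈ ℝ^N by μ_n := φ̂_n + β·sqrt(σ_n). Let 𝒜 := { a ∈ {0,1}^N : Σ_{n=1}^N a_n = I }, and let a ∈ 𝒜 maximize the inner product ⟨a, μ⟩ over 𝒜. Then for every a* ∈ 𝒜: ⟨a*, φ⟩ − ⟨a, φ⟩ ≤ 2·sqrt(N)·β · sqrt( Σ_{n=1}^N σ_n·a_n² ). -/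
open Matrix Finset

/-- Cauchy–Schwarz against the constant vector. -/
theorem sum_le_sqrt_card_mul_sqrt_sum_sq {ι : Type*} (s : Finset ι) (x : ι → ℝ) :
    ∑ i ∈ s, x i ≤ Real.sqrt (s.card : ℝ) * Real.sqrt (∑ i ∈ s, x i ^ 2) := by
  rw [← Real.sqrt_mul (Nat.cast_nonneg _)]
  exact Real.le_sqrt_of_sq_le sq_sum_le_card_mul_sum_sq

/-- The deterministic content of Lemma 6 (regretUpperBound): on the confidence event
where the estimation error is bounded by `β` in the weighted ℓ∞-norm with weights
`(σ_n)^{-1/2}`, the instantaneous regret of the D-UCB action `a` is at most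
`2√N·β·‖a‖_{D_Σ}`. -/
theorem DUCB_regret_upper_bound (N I : ℕ) (hN : 1 ≤ N) (hI1 : 1 ≤ I) (hIN : I ≤ N)
    (β : ℝ) (hβ : 0 ≤ β)
    (S : Matrix (Fin N) (Fin N) ℝ) (hS : S.PosDef)
    (φ φhat : Fin N → ℝ)
    (herr : ∀ n, |φhat n - φ n| / Real.sqrt (S n n) ≤ β)
    (μ : Fin N → ℝ) (hμ : ∀ n, μ n = φhat n + β * Real.sqrt (S n n))
    (a : Fin N → ℝ)
    (ha01 : ∀ n, a n = 0 ∨ a n = 1) (haI : ∑ n, a n = I)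
    (hamax : ∀ b : Fin N → ℝ, (∀ n, b n = 0 ∨ b n = 1) → (∑ n, b n = I) →
      ∑ n, b n * μ n ≤ ∑ n, a n * μ n) :
    ∀ astar : Fin N → ℝ, (∀ n, astar n = 0 ∨ astar n = 1) → (∑ n, astar n = I) →
      (∑ n, astar n * φ n) - (∑ n, a n * φ n)
        ≤ 2 * Real.sqrt N * β * Real.sqrt (∑ n, S n n * (a n) ^ 2) := by
  intro astar hs01 hsI
  have hσ : ∀ n, 0 < S n n := fun n => hS.diag_pos
  have hconf : ∀ n, φ n ≤ μ n ∧ μ n ≤ φ n + 2 * β * Real.sqrt (S n n) := by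
    intro n
    have h := (div_le_iff₀ (Real.sqrt_pos.mpr (hσ n))).mp (herr n)
    have h' := abs_le.mp h
    rw [hμ n]
    constructor <;> linarith [h'.1, h'.2]
  have hoptimism : ∑ n, astar n * φ n ≤ ∑ n, astar n * μ n := by
    refine Finset.sum_le_sum fun n _ => mul_le_mul_of_nonneg_left (hconf n).1 ?_
    rcases hs01 n with h | h <;> simp [h]
  have hwidth : ∑ n, a n * μ n
      ≤ ∑ n, a n * φ n + 2 * β * ∑ n, Real.sqrt (S n n) * a n := by
    rw [Finset.mul_sum, ← Finset.sum_add_distrib]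
    refine Finset.sum_le_sum fun n _ => ?_
    have ha : 0 ≤ a n := by rcases ha01 n with h | h <;> simp [h]
    linarith [mul_le_mul_of_nonneg_left (hconf n).2 ha]
  have hCS : ∑ n, Real.sqrt (S n n) * a n
      ≤ Real.sqrt N * Real.sqrt (∑ n, S n n * (a n) ^ 2) := by
    simpa [mul_pow, Real.sq_sqrt (hσ _).le] using
      sum_le_sqrt_card_mul_sqrt_sum_sq Finset.univ fun n => Real.sqrt (S n n) * a n
  have hscaled := mul_le_mul_of_nonneg_left hCS (mul_nonneg zero_le_two hβ)
  linarith [hamax astar hs01 hsI]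
end
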